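/- Let K be a field and q ∈ K such that (q;q)_j := ∏_{i=1}^{j} (1 − q^i) is nonzero for every j ≥ 1. Let A be an associative unital K-algebra and x, y ∈ A elements satisfying y·x = q·(x·y). Then for all natural numbers m, n: (1/((q;q)_m·(q;q)_n)) · (yⁿ·xᵐ) = ∑_{k=0}^{min(m,n)} ((−1)^k/((q;q)_{m−k}·(q;q)_k·(q;q)_{n−k})) · (x^{m−k}·(x·y)^k·y^{n−k}). -/

import Mathlib

open Finset

section QBinomial

variable {R : Type*} [CommRing R]

/-- The finite `q`-Pochhammer symbol `(q;q)_n`. -/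
def qPochhammer (q : R) (n : ℕ) : R := ∏ i ∈ range n, (1 - q ^ (i + 1))

@[simp] lemma qPochhammer_zero (q : R) : qPochhammer q 0 = 1 := by simp [qPochhammer]

lemma qPochhammer_succ (q : R) (n : ℕ) :
    qPochhammer q (n + 1) = qPochhammer q n * (1 - q ^ (n + 1)) := prod_range_succ _ _

/-- The Gaussian binomial coefficient, defined by the `q`-Pascal recursion. -/
def gaussBinom (q : R) : ℕ → ℕ → R
  | _, 0 => 1
  | 0, _ + 1 => 0
  | m + 1, k + 1 => gaussBinom q m k + q ^ (k + 1) * gaussBinom q m (k + 1)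

@[simp] lemma gaussBinom_zero_right (q : R) (m : ℕ) : gaussBinom q m 0 = 1 := by
  cases m <;> rfl

lemma gaussBinom_succ_succ (q : R) (m k : ℕ) :
    gaussBinom q (m + 1) (k + 1) =
      gaussBinom q m k + q ^ (k + 1) * gaussBinom q m (k + 1) := rfl

lemma gaussBinom_eq_zero_of_lt (q : R) {m k : ℕ} (h : m < k) : gaussBinom q m k = 0 := by
  induction m generalizing k with
  | zero => obtain _ | k := k <;> [omega; rfl]
  | succ m ih =>
    obtain _ | k := k
    · omega
    · rw [gaussBinom_succ_succ, ih (by omega), ih (by omega), mul_zero, add_zero]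

@[simp] lemma gaussBinom_self (q : R) (m : ℕ) : gaussBinom q m m = 1 := by
  induction m with
  | zero => rfl
  | succ m ih => rw [gaussBinom_succ_succ, ih, gaussBinom_eq_zero_of_lt q m.lt_succ_self]; ring

lemma gaussBinom_mul_qPochhammer (q : R) (k l : ℕ) :
    gaussBinom q (k + l) k * qPochhammer q k * qPochhammer q l = qPochhammer q (k + l) := by
  induction k generalizing l with
  | zero => simp
  | succ k ihk =>
    induction l with
    | zero => simp
    | succ l ihl =>
      have hk := ihk (l + 1)
      rw [← add_assoc] at hk
      have hsplit : k + 1 + (l + 1) = (k + l + 1) + 1 := by ring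
      have hcomm : k + 1 + l = k + l + 1 := by ring
      rw [hcomm] at ihl
      rw [hsplit, gaussBinom_succ_succ, qPochhammer_succ q (k + l + 1)]
      rw [qPochhammer_succ q l] at hk ⊢
      rw [qPochhammer_succ q k] at ihl ⊢
      linear_combination (1 - q ^ (k + 1)) * hk + q ^ (k + 1) * (1 - q ^ (l + 1)) * ihl

/-- Cauchy's expansion of a monomial in the polynomials `∏_{i < k} (z - q^i)`. -/
lemma sum_gaussBinom_mul_prod_sub (q z : R) (m : ℕ) :
    ∑ k ∈ range (m + 1), gaussBinom q m k * ∏ i ∈ range k, (z - q ^ i) = z ^ m := by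
  induction m with
  | zero => simp
  | succ m ih =>
    have hshift : ∑ k ∈ range (m + 1),
          q ^ (k + 1) * gaussBinom q m (k + 1) * ∏ i ∈ range (k + 1), (z - q ^ i) + 1 =
        ∑ k ∈ range (m + 1), q ^ k * gaussBinom q m k * ∏ i ∈ range k, (z - q ^ i) := by
      have h := sum_range_succ'
        (fun k => q ^ k * gaussBinom q m k * ∏ i ∈ range k, (z - q ^ i)) (m + 1)
      rw [sum_range_succ, gaussBinom_eq_zero_of_lt q m.lt_succ_self] at h
      simpa using h.symm
    rw [sum_range_succ']
    simp only [gaussBinom_succ_succ, add_mul, sum_add_distrib, gaussBinom_zero_right, range_zero,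
      prod_empty, mul_one]
    rw [add_assoc, hshift, ← sum_add_distrib, pow_succ, ← ih, sum_mul]
    refine sum_congr rfl fun k _ => ?_
    rw [prod_range_succ]
    ring

lemma prod_pow_sub_pow_mul_qPochhammer (q : R) (l k : ℕ) :
    (∏ i ∈ range k, (q ^ (l + k) - q ^ i)) * qPochhammer q l =
      (-1) ^ k * q ^ k.choose 2 * qPochhammer q (l + k) := by
  induction k generalizing l with
  | zero => simp
  | succ k ih =>
    have h := ih (l + 1)
    have hsplit : l + 1 + k = l + (k + 1) := by ring
    rw [hsplit, qPochhammer_succ] at h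
    have hchoose : (k + 1).choose 2 = k + k.choose 2 := by
      rw [Nat.choose_succ_succ' k 1, Nat.choose_one_right]
    rw [prod_range_succ, hchoose]
    linear_combination (-q ^ k) * h

end QBinomial

lemma qPochhammer_pentagon {K : Type*} [Field K] (q : K) (hq : ∀ j, qPochhammer q j ≠ 0)
    (m n : ℕ) :
    q ^ (m * n) / (qPochhammer q m * qPochhammer q n) =
      ∑ k ∈ range (min m n + 1), (-1) ^ k * q ^ k.choose 2 /
        (qPochhammer q (m - k) * qPochhammer q k * qPochhammer q (n - k)) := by
  have hcauchy := sum_gaussBinom_mul_prod_sub q (q ^ n) m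
  rw [← sum_subset (range_mono (show min m n + 1 ≤ m + 1 by omega))] at hcauchy
  · rw [mul_comm m n, pow_mul, ← hcauchy, sum_div]
    refine sum_congr rfl fun k hk => ?_
    rw [mem_range] at hk
    have hm := gaussBinom_mul_qPochhammer q k (m - k)
    have hn := prod_pow_sub_pow_mul_qPochhammer q (n - k) k
    rw [Nat.add_sub_cancel' (by omega)] at hm
    rw [Nat.sub_add_cancel (by omega)] at hn
    rw [div_eq_div_iff (mul_ne_zero (hq _) (hq _))
      (mul_ne_zero (mul_ne_zero (hq _) (hq _)) (hq _)), ← hm]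
    linear_combination gaussBinom q m k * qPochhammer q k * qPochhammer q (m - k) * hn
  · intro k hk hk'
    rw [mem_range] at hk hk'
    rw [prod_eq_zero (i := n) (mem_range.2 (by omega)) (sub_self _), mul_zero]

section QuantumTorus

variable {R A : Type*} [CommRing R] [Ring A] [Algebra R A] {q : R} {x y : A}

lemma mul_pow_of_q_commute (hxy : y * x = q • (x * y)) (m : ℕ) :
    y * x ^ m = q ^ m • (x ^ m * y) := by
  induction m with
  | zero => simp
  | succ m ih =>
    rw [pow_succ x, ← mul_assoc, ih, smul_mul_assoc, mul_assoc, hxy, mul_smul_comm, smul_smul,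
      ← pow_succ, mul_assoc]

lemma pow_mul_pow_of_q_commute (hxy : y * x = q • (x * y)) (m n : ℕ) :
    y ^ n * x ^ m = q ^ (m * n) • (x ^ m * y ^ n) := by
  induction n with
  | zero => simp
  | succ n ih =>
    rw [pow_succ y, mul_assoc, mul_pow_of_q_commute hxy, mul_smul_comm, ← mul_assoc, ih,
      smul_mul_assoc, smul_smul, mul_assoc, ← pow_add, mul_add_one, add_comm m]

lemma pow_of_q_commute (hxy : y * x = q • (x * y)) (k : ℕ) :
    (x * y) ^ k = q ^ k.choose 2 • (x ^ k * y ^ k) := by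
  induction k with
  | zero => simp
  | succ k ih =>
    have h := pow_mul_pow_of_q_commute hxy 1 k
    rw [pow_one, one_mul] at h
    rw [pow_succ (x * y), ih, smul_mul_assoc, mul_assoc, ← mul_assoc (y ^ k), h, smul_mul_assoc,
      mul_smul_comm, smul_smul, ← pow_add, Nat.choose_succ_succ' k 1, Nat.choose_one_right,
      add_comm k, pow_succ x, pow_succ y]
    simp only [mul_assoc]

lemma pow_mul_pow_mul_pow_of_q_commute (hxy : y * x = q • (x * y)) {m n k : ℕ}
    (hm : k ≤ m) (hn : k ≤ n) :
    x ^ (m - k) * (x * y) ^ k * y ^ (n - k) = q ^ k.choose 2 • (x ^ m * y ^ n) := by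
  rw [pow_of_q_commute hxy, mul_smul_comm, smul_mul_assoc, ← mul_assoc, ← pow_add,
    Nat.sub_add_cancel hm, mul_assoc, ← pow_add, Nat.add_sub_cancel' hn]

end QuantumTorus

/-- **Pentagon identity for quantum dilogarithms, coefficient of `u^m v^n`.**
Let `K` be a field and `q ∈ K` with `(q;q)_j = ∏_{i=1}^j (1 - q^i) ≠ 0` for all
`j ≥ 1`.  Let `A` be an associative unital `K`-algebra and `x, y ∈ A` with
`y x = q (x y)`.  Then for all `m n : ℕ`:
`(1/((q;q)_m (q;q)_n)) • (y^n x^m)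
  = ∑_{k=0}^{min m n} ((-1)^k/((q;q)_{m-k} (q;q)_k (q;q)_{n-k}))
      • (x^(m-k) (x y)^k y^(n-k))`. -/
theorem pentagon_identity_coefficients {K A : Type*} [Field K] [Ring A] [Algebra K A]
    (q : K) (hq : ∀ j : ℕ, 1 ≤ j → (∏ i ∈ Finset.range j, (1 - q ^ (i + 1))) ≠ 0)
    (x y : A) (hxy : y * x = q • (x * y)) :
    ∀ m n : ℕ,
      ((1 : K) / ((∏ i ∈ Finset.range m, (1 - q ^ (i + 1))) *
          (∏ i ∈ Finset.range n, (1 - q ^ (i + 1))))) • (y ^ n * x ^ m) =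
        ∑ k ∈ Finset.range (min m n + 1),
          (((-1 : K) ^ k /
              ((∏ i ∈ Finset.range (m - k), (1 - q ^ (i + 1))) *
                (∏ i ∈ Finset.range k, (1 - q ^ (i + 1))) *
                (∏ i ∈ Finset.range (n - k), (1 - q ^ (i + 1))))) •
            (x ^ (m - k) * (x * y) ^ k * y ^ (n - k))) := by
  intro m n
  have hq' : ∀ j, qPochhammer q j ≠ 0 := fun j => by
    obtain rfl | hj := Nat.eq_zero_or_pos j
    · simp
    · exact hq j hj
  simp only [← qPochhammer.eq_def]
  rw [pow_mul_pow_of_q_commute hxy, smul_smul, div_mul_eq_mul_div, one_mul,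
    qPochhammer_pentagon q hq', sum_smul]
  refine sum_congr rfl fun k hk => ?_
  rw [mem_range] at hk
  rw [pow_mul_pow_mul_pow_of_q_commute hxy (by omega) (by omega), smul_smul, div_mul_eq_mul_div]
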